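/- arXiv:1903.11939 — 2 statements merged into one kernel-verified Lean document; each statement's English description precedes it below -/
import Mathlib

section
/- Let 0 < α < 1, t > 0 and x > 0. Then a_0(x,t) > a_1(x,t)/2. -/
open Real MeasureTheory

/-- The Mittag-Leffler function `E_α(r) = ∑ r^k / Γ(1+kα)`. -/
noncomputable def mittagLeffler (α r : ℝ) : ℝ :=
  ∑' k : ℕ, r ^ k / Real.Gamma (1 + k * α)

/-- The coefficients `a_k(x,t)` obtained by splitting the Fourier integral of the
fundamental solution over the intervals where `cos (xξ)` has a fixed sign. -/
noncomputable def aCoeff (α t x : ℝ) (k : ℕ) : ℝ :=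
  if k = 0 then
    ∫ ξ in (0 : ℝ)..(π / (2 * x)),
      mittagLeffler α ((1 - ξ ^ 2) * t ^ α) * Real.cos (x * ξ)
  else
    (-1 : ℝ) ^ k *
      ∫ ξ in (π * (2 * (k : ℝ) - 1) / (2 * x))..(π * (2 * (k : ℝ) + 1) / (2 * x)),
        mittagLeffler α ((1 - ξ ^ 2) * t ^ α) * Real.cos (x * ξ)

/-!
Since `ξ ↦ E_α((1 - ξ²) t^α)` is strictly decreasing on `ξ ≥ 0` as soon as `E_α` is strictly
increasing, comparing it with its value `g` at the common endpoint `π / (2x)` of the two intervals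
gives `a₀ > g / x ≥ a₁ / 2`, because `cos (xξ)` integrates to `1 / x` and `-2 / x` over them.

That `E_α` increases on the negative half-line follows from
`E_α(-t^α) = 1 - ∫₀ᵗ s^(α-1) E_{α,α}(-s^α) ds` and the positivity of `w(s) = E_{α,α}(-s^α)`. The
latter solves a Volterra equation `w(t) + ∫₀ᵗ K(t,s) w(s) ds = 1/Γ(α)` with `K ≥ 0` decreasing
in `t`, and such a solution cannot reach zero: shortly before a first zero `T`, at a maximum `m`
of `w` over `[c, T]`, subtracting the equations at `m` and `T` yields
`w(T) ≥ w(m) (1 - ∫ₘᵀ K(T,s) ds) > 0`.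
-/

open Set

/-! ### Gamma and beta integrals -/

lemma rpow_mul_exp_neg_le_mul_Gamma {R s : ℝ} (hR : 0 ≤ R) (hs : 0 < s) :
    R ^ s * exp (-R) ≤ s * Gamma s := by
  have hint : IntegrableOn (fun u => exp (-u) * u ^ s) (Ioi 0) := by
    simpa using GammaIntegral_convergent (s := s + 1) (by linarith)
  have hsub : Ioi R ⊆ Ioi (0 : ℝ) := Ioi_subset_Ioi hR
  calc R ^ s * exp (-R) = ∫ u in Ioi R, exp (-u) * R ^ s := by
        rw [integral_mul_const, integral_exp_neg_Ioi, mul_comm]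
    _ ≤ ∫ u in Ioi R, exp (-u) * u ^ s := by
        refine setIntegral_mono_on ((integrableOn_exp_neg_Ioi R).mul_const _)
          (hint.mono_set hsub) measurableSet_Ioi fun u hu => ?_
        have hRu : R ≤ u := le_of_lt hu
        gcongr
    _ ≤ ∫ u in Ioi 0, exp (-u) * u ^ s := by
        refine setIntegral_mono_set hint ?_ hsub.eventuallyLE
        filter_upwards [ae_restrict_mem measurableSet_Ioi] with u (hu : 0 < u)
        exact mul_nonneg (exp_pos _).le (rpow_nonneg hu.le _)
    _ = s * Gamma s := by
        rw [← Gamma_add_one hs.ne', Gamma_eq_integral (by linarith), add_sub_cancel_right]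

lemma rpow_add_natCast_mul_sub_one {s : ℝ} (hs : 0 < s) (a b : ℝ) (k : ℕ) :
    s ^ (a + k * b - 1) = s ^ (a - 1) * (s ^ b) ^ k := by
  rw [← rpow_natCast, ← rpow_mul hs.le, ← rpow_add hs]
  ring_nf

lemma integral_rpow_mul_sub_rpow {a b t : ℝ} (ha : 0 < a) (hb : 0 < b) (ht : 0 < t) :
    ∫ s in (0 : ℝ)..t, s ^ (a - 1) * (t - s) ^ (b - 1) =
      t ^ (a + b - 1) * ProbabilityTheory.beta a b := by
  have h := Complex.betaIntegral_scaled a b ht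
  rw [Complex.betaIntegral_eq_Gamma_mul_div _ _ (by simpa) (by simpa), ← Complex.ofReal_add,
    Complex.Gamma_ofReal, Complex.Gamma_ofReal, Complex.Gamma_ofReal] at h
  apply Complex.ofReal_injective
  rw [ProbabilityTheory.beta, Complex.ofReal_mul, Complex.ofReal_cpow ht.le]
  push_cast at h ⊢
  rw [← h, ← intervalIntegral.integral_ofReal]
  refine intervalIntegral.integral_congr_Ioo_of_le ht.le fun s hs => ?_
  have hts : 0 ≤ t - s := sub_nonneg.2 hs.2.le
  simp only [Complex.ofReal_mul, Complex.ofReal_cpow hs.1.le, Complex.ofReal_cpow hts,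
    Complex.ofReal_sub, Complex.ofReal_one]

lemma intervalIntegrable_rpow_mul_sub_rpow {a b t : ℝ} (ha : 0 < a) (hb : 0 < b) (ht : 0 < t) :
    IntervalIntegrable (fun s => s ^ (a - 1) * (t - s) ^ (b - 1)) volume 0 t := by
  refine intervalIntegral.intervalIntegrable_of_integral_ne_zero ?_
  rw [integral_rpow_mul_sub_rpow ha hb ht]
  exact (mul_pos (rpow_pos_of_pos ht _) (ProbabilityTheory.beta_pos ha hb)).ne'

/-! ### The two-parameter Mittag-Leffler function -/

/-- The two-parameter Mittag-Leffler function `E_{α,β}(r) = ∑ r^k / Γ(β+kα)`, which extends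
`mittagLeffler` in the sense that `E_α = E_{α,1}`. -/
noncomputable def mittagLeffler₂ (α β r : ℝ) : ℝ :=
  ∑' k : ℕ, r ^ k / Gamma (β + k * α)

section MittagLeffler

variable {α β : ℝ} (hα : 0 < α) (hβ : 0 < β)

include hα hβ

lemma summable_mittagLeffler₂ (r : ℝ) :
    Summable fun k : ℕ => r ^ k / Gamma (β + k * α) := by
  -- The choice `R ^ α = 2|r| + 1` makes the bound `Γ(s) ≥ R ^ s * exp (-R) / s` geometric in `k`.
  set M : ℝ := 2 * |r| + 1
  have hM : 0 < M := by positivity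
  set R : ℝ := M ^ α⁻¹
  have hR : 0 < R := by positivity
  have hRα : R ^ α = M := rpow_inv_rpow hM.le hα.ne'
  have hq : ‖|r| / M‖ < 1 := by
    rw [norm_of_nonneg (by positivity), div_lt_one hM]
    linarith [abs_nonneg r]
  have hgeom : Summable fun k : ℕ => (β + k * α) * (|r| / M) ^ k := by
    have hlin := summable_pow_mul_geometric_of_norm_lt_one 1 hq
    refine (((summable_geometric_of_norm_lt_one hq).mul_left β).add (hlin.mul_left α)).congr
      fun k => ?_
    ring
  refine Summable.of_norm_bounded (hgeom.mul_left (exp R / R ^ β)) fun k => ?_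
  have hs : 0 < β + k * α := by positivity
  have hΓ := Gamma_pos_of_pos hs
  have hbound : R ^ β * M ^ k * exp (-R) ≤ (β + k * α) * Gamma (β + k * α) := by
    have h := rpow_mul_exp_neg_le_mul_Gamma hR.le hs
    rwa [rpow_add hR, mul_comm (k : ℝ) α, rpow_mul hR.le, hRα, rpow_natCast,
      mul_comm α (k : ℝ)] at h
  rw [norm_div, norm_pow, norm_eq_abs, norm_of_nonneg hΓ.le, div_le_iff₀ hΓ]
  calc |r| ^ k = exp R / R ^ β * (|r| / M) ^ k * (R ^ β * M ^ k * exp (-R)) := by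
        rw [exp_neg, div_pow]
        field_simp
    _ ≤ exp R / R ^ β * (|r| / M) ^ k * ((β + k * α) * Gamma (β + k * α)) := by gcongr
    _ = _ := by ring

lemma continuous_mittagLeffler₂ : Continuous (mittagLeffler₂ α β) := by
  refine continuous_iff_continuousAt.2 fun r => ?_
  have hball : ContinuousOn (mittagLeffler₂ α β) (Metric.ball 0 (|r| + 1)) := by
    refine continuousOn_tsum (fun k => by fun_prop) (summable_mittagLeffler₂ hα hβ (|r| + 1))
      fun k y hy => ?_
    have hΓ : 0 < Gamma (β + k * α) := Gamma_pos_of_pos (by positivity)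
    have hy' : ‖y‖ ≤ |r| + 1 := (mem_ball_zero_iff.1 hy).le
    rw [norm_div, norm_pow, norm_of_nonneg hΓ.le]
    gcongr
  exact hball.continuousAt (Metric.isOpen_ball.mem_nhds (by simp))

lemma strictMonoOn_mittagLeffler₂_Ici : StrictMonoOn (mittagLeffler₂ α β) (Ici 0) := by
  intro u hu v _ huv
  have hu0 : 0 ≤ u := hu
  have hΓ (k : ℕ) : 0 < Gamma (β + k * α) := Gamma_pos_of_pos (by positivity)
  refine (summable_mittagLeffler₂ hα hβ u).tsum_lt_tsum (i := 1) (fun k => ?_) ?_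
    (summable_mittagLeffler₂ hα hβ v)
  · have := hΓ k
    gcongr
  · have := hΓ 1
    gcongr

lemma mittagLeffler₂_eq_inv_Gamma_add_mul (r : ℝ) :
    mittagLeffler₂ α β r = (Gamma β)⁻¹ + r * mittagLeffler₂ α (β + α) r := by
  rw [mittagLeffler₂, (summable_mittagLeffler₂ hα hβ r).tsum_eq_zero_add, mittagLeffler₂,
    ← tsum_mul_left]
  congr 1
  · simp only [pow_zero, Nat.cast_zero, zero_mul, add_zero, one_div]
  · refine tsum_congr fun k => ?_
    push_cast
    ring_nf

lemma integral_mittagLeffler₂_term {γ t : ℝ} (hγ : 0 < γ) (ht : 0 < t) (c : ℝ) (k : ℕ) :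
    ∫ s in (0 : ℝ)..t,
        c ^ k / Gamma (β + k * α) * (s ^ (β + k * α - 1) * (t - s) ^ (γ - 1)) =
      Gamma γ * t ^ (β + γ - 1) * ((c * t ^ α) ^ k / Gamma (β + γ + k * α)) := by
  have hk : 0 < β + k * α := by positivity
  have hΓ := (Gamma_pos_of_pos hk).ne'
  rw [intervalIntegral.integral_const_mul, integral_rpow_mul_sub_rpow hk hγ ht,
    ProbabilityTheory.beta, add_right_comm, rpow_add_natCast_mul_sub_one ht, mul_pow]
  field_simp

lemma integral_rpow_mul_sub_rpow_mul_mittagLeffler₂ {γ t : ℝ} (hγ : 0 < γ) (ht : 0 < t) (c : ℝ) :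
    ∫ s in (0 : ℝ)..t, s ^ (β - 1) * (t - s) ^ (γ - 1) * mittagLeffler₂ α β (c * s ^ α) =
      Gamma γ * t ^ (β + γ - 1) * mittagLeffler₂ α (β + γ) (c * t ^ α) := by
  let F (c : ℝ) (k : ℕ) (s : ℝ) : ℝ :=
    c ^ k / Gamma (β + k * α) * (s ^ (β + k * α - 1) * (t - s) ^ (γ - 1))
  have hpos (k : ℕ) : 0 < β + k * α := by positivity
  have hF_int (k : ℕ) : IntegrableOn (F c k) (Ioc 0 t) :=
    ((intervalIntegrable_rpow_mul_sub_rpow (hpos k) hγ ht).const_mul _).1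
  have hF_integral (c : ℝ) (k : ℕ) : ∫ s in Ioc 0 t, F c k s =
      Gamma γ * t ^ (β + γ - 1) * ((c * t ^ α) ^ k / Gamma (β + γ + k * α)) := by
    rw [← intervalIntegral.integral_of_le ht.le]
    exact integral_mittagLeffler₂_term hα hβ hγ ht c k
  have hF_norm (k : ℕ) : ∫ s in Ioc 0 t, ‖F c k s‖ = ∫ s in Ioc 0 t, F |c| k s := by
    refine setIntegral_congr_fun measurableSet_Ioc fun s hs => ?_
    have hts : 0 ≤ t - s := sub_nonneg.2 hs.2
    simp only [F, norm_mul, norm_div, norm_pow, norm_eq_abs,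
      abs_of_pos (Gamma_pos_of_pos (hpos k)), abs_of_nonneg (rpow_nonneg hs.1.le _),
      abs_of_nonneg (rpow_nonneg hts _)]
  have hF_tsum : EqOn (fun s => s ^ (β - 1) * (t - s) ^ (γ - 1) * mittagLeffler₂ α β (c * s ^ α))
      (fun s => ∑' k, F c k s) (Ioc 0 t) := fun s hs => by
    simp only [F, mittagLeffler₂, ← tsum_mul_left, rpow_add_natCast_mul_sub_one hs.1, mul_pow]
    exact tsum_congr fun k => by ring
  have hsum := hasSum_integral_of_summable_integral_norm hF_int <| by
    simp only [hF_norm, hF_integral]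
    exact (summable_mittagLeffler₂ hα (add_pos hβ hγ) _).mul_left _
  rw [intervalIntegral.integral_of_le ht.le, setIntegral_congr_fun measurableSet_Ioc hF_tsum,
    ← hsum.tsum_eq, mittagLeffler₂, ← tsum_mul_left]
  exact tsum_congr (hF_integral c)

end MittagLeffler

/-! ### Positivity of solutions of Volterra equations -/

/-- A nonnegative Volterra kernel `K t s`, constrained only for `0 < s < t`, that is integrable in
the inner variable `s` and decreasing in the outer variable `t`; it may be singular at the endpoints
`s = 0` and `s = t`. -/
structure IsDecreasingVolterraKernel (K : ℝ → ℝ → ℝ) : Prop where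
  nonneg : ∀ {t s}, 0 < s → s < t → 0 ≤ K t s
  anti : ∀ {t₁ t₂ s}, 0 < s → s < t₁ → t₁ ≤ t₂ → K t₂ s ≤ K t₁ s
  intervalIntegrable : ∀ {t}, 0 < t → IntervalIntegrable (K t) volume 0 t

lemma exists_forall_integral_lt {f : ℝ → ℝ} {a b ε : ℝ} (hf : IntervalIntegrable f volume a b)
    (hab : a < b) (hε : 0 < ε) : ∃ c ∈ Ioo a b, ∀ s ∈ Icc c b, ∫ u in s..b, f u < ε := by
  have hcont : ContinuousOn (fun s => ∫ u in s..b, f u) (Icc a b) := by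
    rw [← uIcc_of_le hab.le]
    refine intervalIntegral.continuousOn_primitive_interval_left ?_
    rwa [uIcc_of_le hab.le, ← intervalIntegrable_iff_integrableOn_Icc_of_le hab.le]
  have hev := (hcont b (right_mem_Icc.2 hab.le)).eventually_lt_const (by simpa using hε)
  rw [nhdsWithin_Icc_eq_nhdsLE hab] at hev
  obtain ⟨l, hl, hlt⟩ := (mem_nhdsLE_iff_exists_mem_Ico_Ioc_subset hab).1 hev
  obtain ⟨c, hlc, hcb⟩ := exists_between hl.2
  exact ⟨c, ⟨hl.1.trans_lt hlc, hcb⟩, fun s hs => hlt ⟨hlc.trans_le hs.1, hs.2⟩⟩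

lemma exists_first_nonpos {w : ℝ → ℝ} {a t : ℝ} (hw : ContinuousOn w (Icc a t)) (hat : a ≤ t)
    (ha : 0 < w a) (ht : w t ≤ 0) : ∃ T, a < T ∧ w T ≤ 0 ∧ ∀ s ∈ Ico a T, 0 < w s := by
  have hclosed : IsClosed (Icc a t ∩ w ⁻¹' Iic 0) :=
    hw.preimage_isClosed_of_isClosed isClosed_Icc isClosed_Iic
  obtain ⟨T, ⟨hT, hwT⟩, hleast⟩ :=
    (isCompact_Icc.of_isClosed_subset hclosed inter_subset_left).exists_isLeast
      ⟨t, right_mem_Icc.2 hat, ht⟩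
  refine ⟨T, hT.1.lt_of_ne ?_, hwT, fun s hs => ?_⟩
  · rintro rfl
    exact ha.not_ge hwT
  · by_contra! hws
    exact hs.2.not_ge (hleast ⟨⟨hs.1, hs.2.le.trans hT.2⟩, hws⟩)

namespace IsDecreasingVolterraKernel

variable {K : ℝ → ℝ → ℝ} {w f : ℝ → ℝ}

lemma intervalIntegrable_mul (hK : IsDecreasingVolterraKernel K) {a b t : ℝ} (ht : 0 < t)
    (ha : 0 ≤ a) (hab : a ≤ b) (hbt : b ≤ t) (hw : ContinuousOn w (Icc a b)) :
    IntervalIntegrable (fun s => K t s * w s) volume a b := by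
  refine ((hK.intervalIntegrable ht).mono_set ?_).mul_continuousOn (by rwa [uIcc_of_le hab])
  rw [uIcc_of_le hab, uIcc_of_le ht.le]
  exact Icc_subset_Icc ha hbt

lemma integral_mul_le_of_le (hK : IsDecreasingVolterraKernel K) {m T : ℝ} (hm : 0 < m)
    (hmT : m ≤ T) (hw : ContinuousOn w (Icc 0 m)) (hpos : ∀ s ∈ Ioo 0 m, 0 ≤ w s) :
    ∫ s in (0 : ℝ)..m, K T s * w s ≤ ∫ s in (0 : ℝ)..m, K m s * w s :=
  intervalIntegral.integral_mono_on_of_le_Ioo hm.le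
    (hK.intervalIntegrable_mul (hm.trans_le hmT) le_rfl hm.le hmT hw)
    (hK.intervalIntegrable_mul hm le_rfl hm.le le_rfl hw)
    fun s hs => mul_le_mul_of_nonneg_right (hK.anti hs.1 hs.2 hmT) (hpos s hs)

lemma integral_mul_le_integral_mul_const (hK : IsDecreasingVolterraKernel K) {m T C : ℝ}
    (hm : 0 < m) (hmT : m ≤ T) (hw : ContinuousOn w (Icc m T)) (hC : ∀ s ∈ Ioo m T, w s ≤ C) :
    ∫ s in m..T, K T s * w s ≤ (∫ s in m..T, K T s) * C := by
  have hT := hm.trans_le hmT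
  rw [← intervalIntegral.integral_mul_const]
  exact intervalIntegral.integral_mono_on_of_le_Ioo hmT
    (hK.intervalIntegrable_mul hT hm.le hmT le_rfl hw)
    (hK.intervalIntegrable_mul hT hm.le hmT le_rfl continuousOn_const)
    fun s hs => mul_le_mul_of_nonneg_left (hC s hs) (hK.nonneg (hm.trans hs.1) hs.2)

lemma pos_of_pos_on_Ico (hK : IsDecreasingVolterraKernel K) {T : ℝ} (hT : 0 < T)
    (hw : ContinuousOn w (Icc 0 T)) (hf : MonotoneOn f (Ioc 0 T))
    (heq : ∀ t ∈ Ioc 0 T, w t + ∫ s in (0 : ℝ)..t, K t s * w s = f t)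
    (hpos : ∀ s ∈ Ico 0 T, 0 < w s) : 0 < w T := by
  by_contra! hwT
  obtain ⟨c, ⟨hc0, hcT⟩, htail⟩ := exists_forall_integral_lt (hK.intervalIntegrable hT) hT one_pos
  obtain ⟨m, ⟨hcm, hmT'⟩, hmax⟩ := isCompact_Icc.exists_isMaxOn (nonempty_Icc.2 hcT.le)
    (hw.mono (Icc_subset_Icc_left hc0.le))
  have hwm : 0 < w m := (hpos c ⟨hc0.le, hcT⟩).trans_le (hmax (left_mem_Icc.2 hcT.le))
  have hm : 0 < m := hc0.trans_le hcm
  have hmT : m < T := hmT'.lt_of_ne fun h => (h ▸ hwm).not_ge hwT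
  have hw0m : ContinuousOn w (Icc 0 m) := hw.mono (Icc_subset_Icc_right hmT')
  have hwmT : ContinuousOn w (Icc m T) := hw.mono (Icc_subset_Icc_left hm.le)
  have hsplit := intervalIntegral.integral_add_adjacent_intervals
    (hK.intervalIntegrable_mul hT le_rfl hm.le hmT' hw0m)
    (hK.intervalIntegrable_mul hT hm.le hmT' le_rfl hwmT)
  have hleft : ∫ s in (0 : ℝ)..m, K T s * w s ≤ ∫ s in (0 : ℝ)..m, K m s * w s :=
    hK.integral_mul_le_of_le hm hmT' hw0m fun s hs => (hpos s ⟨hs.1.le, hs.2.trans hmT⟩).le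
  have hright : ∫ s in m..T, K T s * w s < w m :=
    (hK.integral_mul_le_integral_mul_const hm hmT' hwmT fun s hs =>
      hmax ⟨hcm.trans hs.1.le, hs.2.le⟩).trans_lt
        (mul_lt_of_lt_one_left hwm (htail m ⟨hcm, hmT'⟩))
  linarith [heq m ⟨hm, hmT'⟩, heq T ⟨hT, le_rfl⟩, hf ⟨hm, hmT'⟩ ⟨hT, le_rfl⟩ hmT']

theorem pos_of_add_integral_eq (hK : IsDecreasingVolterraKernel K) (hw : ContinuousOn w (Ici 0))
    (hw0 : 0 < w 0) (hf : MonotoneOn f (Ioi 0))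
    (heq : ∀ t, 0 < t → w t + ∫ s in (0 : ℝ)..t, K t s * w s = f t) {t : ℝ} (ht : 0 ≤ t) :
    0 < w t := by
  by_contra! hwt
  obtain ⟨T, hT, hwT, hpos⟩ := exists_first_nonpos (hw.mono Icc_subset_Ici_self) ht hw0 hwt
  exact (hK.pos_of_pos_on_Ico hT (hw.mono Icc_subset_Ici_self) (hf.mono Ioc_subset_Ioi_self)
    (fun s hs => heq s hs.1) hpos).not_ge hwT

end IsDecreasingVolterraKernel

/-! ### Monotonicity of the Mittag-Leffler function -/

/-- The kernel of the Volterra equation satisfied by `t ↦ E_{α,α}(c t^α)`: it is the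
Riemann–Liouville kernel `(t-s)^(α-1) / Γ(α)` conjugated by the weight `t^(α-1)`. -/
noncomputable def weightedRiemannLiouvilleKernel (α t s : ℝ) : ℝ :=
  (s * (1 - s / t)) ^ (α - 1) / Gamma α

lemma weightedRiemannLiouvilleKernel_eq {α t s : ℝ} (hs : 0 ≤ s) (hst : s ≤ t) (ht : 0 < t) :
    weightedRiemannLiouvilleKernel α t s =
      (t ^ (α - 1) * Gamma α)⁻¹ * (s ^ (α - 1) * (t - s) ^ (α - 1)) := by
  rw [weightedRiemannLiouvilleKernel, one_sub_div ht.ne', ← mul_div_assoc,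
    div_rpow (mul_nonneg hs (sub_nonneg.2 hst)) ht.le, mul_rpow hs (sub_nonneg.2 hst)]
  ring

section Monotonicity

variable {α : ℝ} (hα : 0 < α)

include hα

lemma isDecreasingVolterraKernel_weightedRiemannLiouvilleKernel (hα1 : α ≤ 1) :
    IsDecreasingVolterraKernel (weightedRiemannLiouvilleKernel α) where
  nonneg {t s} hs hst := by
    have hst' : 0 ≤ 1 - s / t := sub_nonneg.2 ((div_le_one (hs.trans hst)).2 hst.le)
    exact div_nonneg (rpow_nonneg (mul_nonneg hs.le hst') _) (Gamma_pos_of_pos hα).le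
  anti {t₁ t₂ s} hs hst h := by
    have ht₁ : 0 < t₁ := hs.trans hst
    have hst' : 0 < 1 - s / t₁ := sub_pos.2 ((div_lt_one ht₁).2 hst)
    refine div_le_div_of_nonneg_right ?_ (Gamma_pos_of_pos hα).le
    refine rpow_le_rpow_of_nonpos (mul_pos hs hst') ?_ (sub_nonpos.2 hα1)
    gcongr
  intervalIntegrable {t} ht := by
    refine ((intervalIntegrable_rpow_mul_sub_rpow hα hα ht).const_mul
      (t ^ (α - 1) * Gamma α)⁻¹).congr_uIoo fun s hs => ?_
    rw [uIoo_of_le ht.le] at hs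
    exact (weightedRiemannLiouvilleKernel_eq hs.1.le hs.2.le ht).symm

lemma mittagLeffler₂_self_mul_rpow_eq {t : ℝ} (ht : 0 < t) (c : ℝ) :
    mittagLeffler₂ α α (c * t ^ α) = (Gamma α)⁻¹ + c * ∫ s in (0 : ℝ)..t,
      weightedRiemannLiouvilleKernel α t s * mittagLeffler₂ α α (c * s ^ α) := by
  have hint : ∫ s in (0 : ℝ)..t,
      weightedRiemannLiouvilleKernel α t s * mittagLeffler₂ α α (c * s ^ α) =
      (t ^ (α - 1) * Gamma α)⁻¹ * ∫ s in (0 : ℝ)..t,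
        s ^ (α - 1) * (t - s) ^ (α - 1) * mittagLeffler₂ α α (c * s ^ α) := by
    rw [← intervalIntegral.integral_const_mul]
    refine intervalIntegral.integral_congr_Ioo_of_le ht.le fun s hs => ?_
    simp only [weightedRiemannLiouvilleKernel_eq hs.1.le hs.2.le ht, mul_assoc]
  have hΓ := (Gamma_pos_of_pos hα).ne'
  have htα := (rpow_pos_of_pos ht (α - 1)).ne'
  rw [hint, integral_rpow_mul_sub_rpow_mul_mittagLeffler₂ hα hα hα ht,
    mittagLeffler₂_eq_inv_Gamma_add_mul hα hα, add_sub_assoc, rpow_add ht]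
  field_simp

lemma mittagLeffler₂_self_neg_rpow_pos (hα1 : α ≤ 1) {t : ℝ} (ht : 0 ≤ t) :
    0 < mittagLeffler₂ α α (-t ^ α) := by
  have hcont : Continuous fun s : ℝ => mittagLeffler₂ α α (-s ^ α) :=
    (continuous_mittagLeffler₂ hα hα).comp (continuous_id.rpow_const fun _ => .inr hα.le).neg
  refine (isDecreasingVolterraKernel_weightedRiemannLiouvilleKernel hα hα1).pos_of_add_integral_eq
    (w := fun s => mittagLeffler₂ α α (-s ^ α)) (f := fun _ => (Gamma α)⁻¹)
    hcont.continuousOn ?_ monotoneOn_const (fun s hs => ?_) ht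
  · rw [zero_rpow hα.ne', neg_zero, mittagLeffler₂_eq_inv_Gamma_add_mul hα hα, zero_mul, add_zero]
    exact inv_pos.2 (Gamma_pos_of_pos hα)
  · have h := mittagLeffler₂_self_mul_rpow_eq hα hs (-1)
    simp only [neg_one_mul] at h
    linarith

lemma mittagLeffler_mul_rpow_eq {t : ℝ} (ht : 0 ≤ t) (c : ℝ) :
    mittagLeffler α (c * t ^ α) =
      1 + c * ∫ s in (0 : ℝ)..t, s ^ (α - 1) * mittagLeffler₂ α α (c * s ^ α) := by
  change mittagLeffler₂ α 1 (c * t ^ α) = _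
  rw [mittagLeffler₂_eq_inv_Gamma_add_mul hα one_pos, Gamma_one, inv_one]
  rcases ht.eq_or_lt with rfl | ht
  · rw [zero_rpow hα.ne', intervalIntegral.integral_same, mul_zero, zero_mul]
  · have h := integral_rpow_mul_sub_rpow_mul_mittagLeffler₂ hα hα one_pos ht c
    simp only [sub_self, rpow_zero, mul_one, Gamma_one, one_mul, add_sub_cancel_right] at h
    rw [h, add_comm α 1, mul_assoc]

lemma strictAntiOn_mittagLeffler_neg_rpow (hα1 : α ≤ 1) :
    StrictAntiOn (fun t => mittagLeffler α (-t ^ α)) (Ici 0) := by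
  intro u hu v hv huv
  have hint (a b : ℝ) : IntervalIntegrable
      (fun s : ℝ => s ^ (α - 1) * mittagLeffler₂ α α (-s ^ α)) volume a b :=
    (intervalIntegral.intervalIntegrable_rpow' (by linarith)).mul_continuousOn
      ((continuous_mittagLeffler₂ hα hα).comp
        (continuous_id.rpow_const fun _ => .inr hα.le).neg).continuousOn
  have hpos : 0 < ∫ s in u..v, s ^ (α - 1) * mittagLeffler₂ α α (-s ^ α) := by
    refine intervalIntegral.intervalIntegral_pos_of_pos_on (hint u v) (fun s hs => ?_) huv
    have hs0 : 0 < s := lt_of_le_of_lt hu hs.1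
    exact mul_pos (rpow_pos_of_pos hs0 _) (mittagLeffler₂_self_neg_rpow_pos hα hα1 hs0.le)
  have hsplit := intervalIntegral.integral_add_adjacent_intervals (hint 0 u) (hint u v)
  have hu' := mittagLeffler_mul_rpow_eq hα hu (-1)
  have hv' := mittagLeffler_mul_rpow_eq hα hv (-1)
  simp only [neg_one_mul] at hu' hv'
  linarith

theorem strictMono_mittagLeffler (hα1 : α ≤ 1) : StrictMono (mittagLeffler α) := by
  refine StrictMonoOn.Iic_union_Ici (a := 0) (fun u hu v hv huv => ?_)
    (strictMonoOn_mittagLeffler₂_Ici hα one_pos)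
  have hu0 : 0 ≤ -u := neg_nonneg.2 hu
  have hv0 : 0 ≤ -v := neg_nonneg.2 hv
  have h := strictAntiOn_mittagLeffler_neg_rpow hα hα1 (rpow_nonneg hv0 α⁻¹) (rpow_nonneg hu0 α⁻¹)
    (rpow_lt_rpow hv0 (neg_lt_neg huv) (inv_pos.2 hα))
  simpa only [rpow_inv_rpow hu0 hα.ne', rpow_inv_rpow hv0 hα.ne', neg_neg] using h

end Monotonicity

/-! ### Cosine integrals of decreasing functions -/

lemma integral_cos_mul {x : ℝ} (hx : x ≠ 0) (u v : ℝ) :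
    ∫ ξ in u..v, cos (x * ξ) = (sin (x * v) - sin (x * u)) / x := by
  rw [intervalIntegral.integral_comp_mul_left (fun ξ => cos ξ) hx, integral_cos, smul_eq_mul,
    inv_mul_eq_div]

lemma div_lt_integral_mul_cos {g : ℝ → ℝ} {x : ℝ} (hx : 0 < x)
    (hg : StrictAntiOn g (Icc 0 (π / (2 * x)))) :
    g (π / (2 * x)) / x < ∫ ξ in (0 : ℝ)..(π / (2 * x)), g ξ * cos (x * ξ) := by
  set b : ℝ := π / (2 * x) with hb
  have hb0 : 0 < b := by positivity
  have hxb : x * b = π / 2 := by rw [hb]; field_simp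
  have hcos (ξ : ℝ) (hξ : ξ ∈ Ioo 0 b) : 0 < cos (x * ξ) :=
    cos_pos_of_mem_Ioo ⟨by linarith [mul_pos hx hξ.1, pi_pos],
      hxb ▸ mul_lt_mul_of_pos_left hξ.2 hx⟩
  have hcont : Continuous fun ξ => cos (x * ξ) := by fun_prop
  have hg_int : IntervalIntegrable g volume 0 b :=
    (uIcc_of_le hb0.le ▸ hg.antitoneOn).intervalIntegrable
  have hint := hg_int.mul_continuousOn hcont.continuousOn
  have hconst := (hcont.intervalIntegrable (μ := volume) 0 b).const_mul (g b)
  have hpos : 0 < ∫ ξ in (0 : ℝ)..b, (g ξ * cos (x * ξ) - g b * cos (x * ξ)) := by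
    refine intervalIntegral.intervalIntegral_pos_of_pos_on (hint.sub hconst) (fun ξ hξ => ?_) hb0
    rw [← sub_mul]
    exact mul_pos (sub_pos.2 (hg (Ioo_subset_Icc_self hξ) (right_mem_Icc.2 hb0.le) hξ.2))
      (hcos ξ hξ)
  rw [intervalIntegral.integral_sub hint hconst, intervalIntegral.integral_const_mul,
    integral_cos_mul hx.ne', hxb, mul_zero, sin_zero, sin_pi_div_two, sub_zero, mul_one_div] at hpos
  exact sub_pos.1 hpos

lemma neg_integral_mul_cos_le {g : ℝ → ℝ} {x : ℝ} (hx : 0 < x)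
    (hg : AntitoneOn g (Icc (π / (2 * x)) (3 * π / (2 * x)))) :
    -∫ ξ in (π / (2 * x))..(3 * π / (2 * x)), g ξ * cos (x * ξ) ≤ 2 * g (π / (2 * x)) / x := by
  set b : ℝ := π / (2 * x) with hb
  set d : ℝ := 3 * π / (2 * x) with hd
  have hbd : b ≤ d := by rw [hb, hd]; gcongr; linarith [pi_pos]
  have hxb : x * b = π / 2 := by rw [hb]; field_simp
  have hxd : x * d = π / 2 + π := by rw [hd]; field_simp; ring
  have hcos (ξ : ℝ) (hξ : ξ ∈ Icc b d) : cos (x * ξ) ≤ 0 :=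
    cos_nonpos_of_pi_div_two_le_of_le (hxb ▸ mul_le_mul_of_nonneg_left hξ.1 hx.le)
      (by rw [add_comm, ← hxd]; exact mul_le_mul_of_nonneg_left hξ.2 hx.le)
  have hcont : Continuous fun ξ => cos (x * ξ) := by fun_prop
  have hg_int : IntervalIntegrable g volume b d := (uIcc_of_le hbd ▸ hg).intervalIntegrable
  have hle : ∫ ξ in b..d, g b * cos (x * ξ) ≤ ∫ ξ in b..d, g ξ * cos (x * ξ) :=
    intervalIntegral.integral_mono_on hbd ((hcont.intervalIntegrable _ _).const_mul _)
      (hg_int.mul_continuousOn hcont.continuousOn) fun ξ hξ =>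
        mul_le_mul_of_nonpos_right (hg (left_mem_Icc.2 hbd) hξ hξ.1) (hcos ξ hξ)
  rw [intervalIntegral.integral_const_mul, integral_cos_mul hx.ne', hxb, hxd, sin_add_pi,
    sin_pi_div_two] at hle
  linear_combination hle

lemma aCoeff_zero (α t x : ℝ) : aCoeff α t x 0 =
    ∫ ξ in (0 : ℝ)..(π / (2 * x)), mittagLeffler α ((1 - ξ ^ 2) * t ^ α) * cos (x * ξ) :=
  if_pos rfl

lemma aCoeff_one (α t x : ℝ) : aCoeff α t x 1 = -∫ ξ in (π / (2 * x))..(3 * π / (2 * x)),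
    mittagLeffler α ((1 - ξ ^ 2) * t ^ α) * cos (x * ξ) := by
  rw [aCoeff, if_neg one_ne_zero, pow_one, neg_one_mul, Nat.cast_one]
  congr 2 <;> ring

theorem aCoeff_zero_gt_half_one_general (α t x : ℝ) (hα : 0 < α) (hα1 : α ≤ 1) (ht : 0 < t)
    (hx : 0 < x) : aCoeff α t x 0 > aCoeff α t x 1 / 2 := by
  set g : ℝ → ℝ := fun ξ => mittagLeffler α ((1 - ξ ^ 2) * t ^ α)
  have hg : StrictAntiOn g (Ici 0) := fun u (hu : 0 ≤ u) v _ huv => by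
    refine strictMono_mittagLeffler hα hα1 ?_
    gcongr
  have hb : 0 ≤ π / (2 * x) := by positivity
  have h₀ : g (π / (2 * x)) / x < aCoeff α t x 0 := by
    rw [aCoeff_zero]
    exact div_lt_integral_mul_cos hx (hg.mono Icc_subset_Ici_self)
  have h₁ : aCoeff α t x 1 ≤ 2 * g (π / (2 * x)) / x := by
    rw [aCoeff_one]
    exact neg_integral_mul_cos_le hx
      (hg.antitoneOn.mono (Icc_subset_Ici_self.trans (Ici_subset_Ici.2 hb)))
  linear_combination h₀ + h₁ / 2

theorem aCoeff_zero_gt_half_one (α t x : ℝ) (hα : 0 < α) (hα1 : α < 1) (ht : 0 < t)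
    (hx : 0 < x) : aCoeff α t x 0 > aCoeff α t x 1 / 2 :=
  aCoeff_zero_gt_half_one_general α t x hα hα1.le ht hx
end

section
/- Let 0 < α < 1, t > 0, and let ℓ, x satisfy 0 < ℓ < π/2 < x. Then a_0(x,t) ≥ (x·cos ℓ/(2ℓ)) · ∫_{1−ℓ²/x²}^{1} E_α(t^α ρ) dρ. -/
open Real MeasureTheory

/-!
On `[0, ℓ / x]` the weight satisfies `cos (x ξ) ≥ cos ℓ ≥ (x ξ / ℓ) cos ℓ`, while the rest of the
integrand is nonnegative on `[0, π / (2 x)] ⊆ [0, 1]`. Replacing `cos (x ξ)` by a multiple of `ξ`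
turns the integral over `[0, ℓ / x]` into one that the substitution `ρ = 1 - ξ ^ 2` simplifies.
Integrability holds because `E_α` is continuous: `Γ (1 + k α)` outgrows every geometric sequence,
so the series has infinite radius of convergence.
-/

lemma rpow_le_exp_mul_Gamma {M s : ℝ} (hM : 0 ≤ M) (hs : 0 ≤ s) :
    M ^ s ≤ exp M * Gamma (s + 1) := by
  have hint : IntegrableOn (fun u => exp (-u) * u ^ s) (Set.Ioi 0) := by
    simpa only [add_sub_cancel_right] using GammaIntegral_convergent (by positivity : 0 < s + 1)
  have hsub : Set.Ioi M ⊆ Set.Ioi (0 : ℝ) := Set.Ioi_subset_Ioi hM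
  have htail : exp (-M) * M ^ s ≤ Gamma (s + 1) := calc
    exp (-M) * M ^ s = ∫ u in Set.Ioi M, exp (-u) * M ^ s := by
      rw [integral_mul_const, integral_exp_neg_Ioi]
    _ ≤ ∫ u in Set.Ioi M, exp (-u) * u ^ s :=
      setIntegral_mono_on ((integrableOn_exp_neg_Ioi M).mul_const _) (hint.mono_set hsub)
        measurableSet_Ioi fun u (hu : M < u) => by gcongr
    _ ≤ ∫ u in Set.Ioi 0, exp (-u) * u ^ s :=
      setIntegral_mono_set hint
        ((ae_restrict_mem measurableSet_Ioi).mono fun u (hu : 0 < u) => by positivity)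
        hsub.eventuallyLE
    _ = Gamma (s + 1) := by
      rw [Gamma_eq_integral (by positivity), add_sub_cancel_right]
  rwa [exp_neg, inv_mul_le_iff₀ (exp_pos M)] at htail

lemma Gamma_one_add_mul_pos {α : ℝ} (hα : 0 ≤ α) (k : ℕ) : 0 < Gamma (1 + k * α) :=
  Gamma_pos_of_pos (by positivity)

lemma summable_pow_div_Gamma {α : ℝ} (hα : 0 < α) (r : ℝ) :
    Summable fun k : ℕ => r ^ k / Gamma (1 + k * α) := by
  set M : ℝ := (2 * |r|) ^ α⁻¹
  have hM : 0 ≤ M := by positivity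
  have hpow (k : ℕ) : M ^ (k * α) = 2 ^ k * |r| ^ k := by
    rw [mul_comm, rpow_mul hM, rpow_inv_rpow (by positivity) hα.ne', rpow_natCast, mul_pow]
  refine .of_norm_bounded (summable_geometric_two.mul_left (exp M)) fun k => ?_
  have hΓ := rpow_le_exp_mul_Gamma hM (by positivity : 0 ≤ k * α)
  rw [hpow, add_comm] at hΓ
  have hΓpos := Gamma_one_add_mul_pos hα.le k
  rw [norm_div, norm_pow, norm_eq_abs, norm_of_nonneg hΓpos.le, div_le_iff₀ hΓpos]
  calc |r| ^ k = (1 / 2) ^ k * (2 ^ k * |r| ^ k) := by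
        rw [← mul_assoc, ← mul_pow]; norm_num
    _ ≤ (1 / 2) ^ k * (exp M * Gamma (1 + k * α)) := by gcongr
    _ = exp M * (1 / 2) ^ k * Gamma (1 + k * α) := by ring

lemma continuous_mittagLeffler {α : ℝ} (hα : 0 < α) : Continuous (mittagLeffler α) := by
  set p := FormalMultilinearSeries.ofScalars ℝ fun k : ℕ => (Gamma (1 + k * α))⁻¹
  have hradius : p.radius = ⊤ := p.radius_eq_top_of_summable_norm fun r => by
    refine (summable_pow_div_Gamma hα r).congr fun k => ?_
    rw [FormalMultilinearSeries.ofScalars_norm,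
      norm_of_nonneg (inv_nonneg.mpr (Gamma_one_add_mul_pos hα.le k).le), div_eq_inv_mul]
  have hsum : mittagLeffler α = p.sum := funext fun r =>
    tsum_congr fun k => by
      rw [FormalMultilinearSeries.ofScalars_apply_eq, smul_eq_mul, div_eq_inv_mul]
  have hcont := p.continuousOn
  rwa [hradius, Metric.eball_top, continuousOn_univ, ← hsum] at hcont

lemma mittagLeffler_nonneg {α r : ℝ} (hα : 0 ≤ α) (hr : 0 ≤ r) : 0 ≤ mittagLeffler α r :=
  tsum_nonneg fun k => div_nonneg (pow_nonneg hr k) (Gamma_one_add_mul_pos hα k).le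

lemma integral_one_sub_sq (g : ℝ → ℝ) {c : ℝ} (hc : 0 ≤ c) :
    ∫ ρ in (1 - c ^ 2)..1, g ρ = 2 * ∫ ξ in 0..c, g (1 - ξ ^ 2) * ξ := by
  have hsubst : ∫ ξ in 0..c, g (1 - ξ ^ 2) * -(2 * ξ) = ∫ ρ in (1 - 0 ^ 2)..(1 - c ^ 2), g ρ := by
    refine intervalIntegral.integral_comp_mul_deriv_of_deriv_nonpos (f := fun ξ => 1 - ξ ^ 2)
      (by fun_prop) (fun ξ _ => by simpa using (hasDerivAt_pow 2 ξ).const_sub 1) fun ξ hξ => ?_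
    rw [min_eq_left hc] at hξ
    linarith [hξ.1]
  rw [zero_pow two_ne_zero, sub_zero] at hsubst
  rw [intervalIntegral.integral_symm, ← hsubst, ← intervalIntegral.integral_neg,
    ← intervalIntegral.integral_const_mul]
  exact intervalIntegral.integral_congr fun ξ _ => by ring

lemma mul_cos_le_mul_cos {θ ℓ : ℝ} (hθ : 0 ≤ θ) (hθℓ : θ ≤ ℓ) (hℓ : ℓ ≤ π / 2) :
    θ * cos ℓ ≤ ℓ * cos θ :=
  mul_le_mul hθℓ (cos_le_cos_of_nonneg_of_le_pi hθ (by linarith [pi_pos]) hθℓ)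
    (cos_nonneg_of_neg_pi_div_two_le_of_le (by linarith) hℓ) (hθ.trans hθℓ)

lemma mul_integral_mul_id_le_mul_integral_mul_cos {f : ℝ → ℝ} {x ℓ : ℝ} (hx : 0 < x)
    (hℓ : 0 ≤ ℓ) (hℓπ : ℓ ≤ π / 2)
    (hf : IntervalIntegrable f volume 0 (π / (2 * x)))
    (hf_nonneg : ∀ ξ ∈ Set.Icc 0 (π / (2 * x)), 0 ≤ f ξ) :
    x * cos ℓ * ∫ ξ in 0..ℓ / x, f ξ * ξ ≤ ℓ * ∫ ξ in 0..π / (2 * x), f ξ * cos (x * ξ) := by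
  have hcut : ℓ / x ≤ π / (2 * x) := by
    rw [← div_div]
    gcongr
  have hcut_nonneg : 0 ≤ ℓ / x := by positivity
  have hf_cut : IntervalIntegrable f volume 0 (ℓ / x) :=
    hf.mono_set (Set.uIcc_subset_uIcc_left (Set.mem_uIcc_of_le hcut_nonneg hcut))
  have hweight : x * cos ℓ * ∫ ξ in 0..ℓ / x, f ξ * ξ ≤
      ℓ * ∫ ξ in 0..ℓ / x, f ξ * cos (x * ξ) := by
    rw [← intervalIntegral.integral_const_mul, ← intervalIntegral.integral_const_mul]
    refine intervalIntegral.integral_mono_on hcut_nonneg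
      ((hf_cut.mul_continuousOn (by fun_prop)).const_mul _)
      ((hf_cut.mul_continuousOn (by fun_prop)).const_mul _) fun ξ hξ => ?_
    calc x * cos ℓ * (f ξ * ξ) = f ξ * (x * ξ * cos ℓ) := by ring
      _ ≤ f ξ * (ℓ * cos (x * ξ)) :=
        mul_le_mul_of_nonneg_left
          (mul_cos_le_mul_cos (mul_nonneg hx.le hξ.1) ((le_div_iff₀' hx).mp hξ.2) hℓπ)
          (hf_nonneg ξ ⟨hξ.1, hξ.2.trans hcut⟩)
      _ = ℓ * (f ξ * cos (x * ξ)) := by ring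
  have hextend : ∫ ξ in 0..ℓ / x, f ξ * cos (x * ξ) ≤
      ∫ ξ in 0..π / (2 * x), f ξ * cos (x * ξ) := by
    refine intervalIntegral.integral_mono_interval le_rfl hcut_nonneg hcut
      ((ae_restrict_mem measurableSet_Ioc).mono fun ξ hξ => ?_)
      (hf.mul_continuousOn (by fun_prop))
    have hxξ : x * ξ ≤ π / 2 := by rw [← le_div_iff₀' hx, div_div]; exact hξ.2
    exact mul_nonneg (hf_nonneg ξ ⟨hξ.1.le, hξ.2⟩)
      (cos_nonneg_of_neg_pi_div_two_le_of_le (by linarith [pi_pos, mul_pos hx hξ.1]) hxξ)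
  exact hweight.trans (mul_le_mul_of_nonneg_left hextend hℓ)

theorem aCoeff_zero_lower_bound_general (α t x ℓ : ℝ) (hα : 0 < α) (ht : 0 ≤ t)
    (hℓ : 0 < ℓ) (hℓπ : ℓ ≤ π / 2) (hx : π / 2 ≤ x) :
    aCoeff α t x 0 ≥
      (x * Real.cos ℓ / (2 * ℓ)) *
        ∫ ρ in (1 - ℓ ^ 2 / x ^ 2)..(1 : ℝ), mittagLeffler α (t ^ α * ρ) := by
  have hx_pos : 0 < x := pi_div_two_pos.trans_le hx
  set f : ℝ → ℝ := fun ξ => mittagLeffler α (t ^ α * (1 - ξ ^ 2)) with hf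
  have hf_cont : Continuous f := (continuous_mittagLeffler hα).comp (by fun_prop)
  have hend : π / (2 * x) ≤ 1 := by
    rw [← div_div]
    exact div_le_one_of_le₀ hx hx_pos.le
  have hf_nonneg : ∀ ξ ∈ Set.Icc 0 (π / (2 * x)), 0 ≤ f ξ := fun ξ hξ =>
    mittagLeffler_nonneg hα.le <| mul_nonneg (by positivity) <|
      sub_nonneg.mpr (pow_le_one₀ hξ.1 (hξ.2.trans hend))
  have haCoeff : aCoeff α t x 0 = ∫ ξ in 0..π / (2 * x), f ξ * cos (x * ξ) := by
    simp only [aCoeff, if_true, hf, mul_comm (t ^ α)]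
  rw [haCoeff, ge_iff_le, ← div_pow,
    integral_one_sub_sq (fun ρ => mittagLeffler α (t ^ α * ρ)) (by positivity)]
  calc x * cos ℓ / (2 * ℓ) * (2 * ∫ ξ in 0..ℓ / x, f ξ * ξ)
      = (x * cos ℓ * ∫ ξ in 0..ℓ / x, f ξ * ξ) / ℓ := by field_simp
    _ ≤ ∫ ξ in 0..π / (2 * x), f ξ * cos (x * ξ) :=
      (div_le_iff₀' hℓ).mpr <| mul_integral_mul_id_le_mul_integral_mul_cos hx_pos hℓ.le hℓπ
        (hf_cont.intervalIntegrable _ _) hf_nonneg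

theorem aCoeff_zero_lower_bound (α t x ℓ : ℝ) (hα : 0 < α) (hα1 : α < 1) (ht : 0 < t)
    (hℓ : 0 < ℓ) (hℓπ : ℓ < π / 2) (hx : π / 2 < x) :
    aCoeff α t x 0 ≥
      (x * Real.cos ℓ / (2 * ℓ)) *
        ∫ ρ in (1 - ℓ ^ 2 / x ^ 2)..(1 : ℝ), mittagLeffler α (t ^ α * ρ) :=
  aCoeff_zero_lower_bound_general α t x ℓ hα ht.le hℓ hℓπ.le hx.le
end
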